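/- arXiv:2603.13508 — 4 statements merged into one kernel-verified Lean document; each statement's English description precedes it below -/
import Mathlib

section
/- Let n ∈ ℕ, let a : Fin n → ℝ be a coefficient vector, b ∈ ℝ, let i be an index with a i > 0, and let ℓ, u : Fin n → ℝ satisfy ℓ j ≤ u j for every j ≠ i. Define T := (b − ∑_{j ≠ i, a j > 0} a j · ℓ j − ∑_{j ≠ i, a j < 0} a j · u j) / a i. Then for every x ∈ ℝ: there exists y : Fin n → ℝ with y i = x, ℓ j ≤ y j ≤ u j for all j ≠ i, and ∑_j a j · y j ≤ b, if and only if x ≤ T. In particular, T is exactly the tightened upper bound on variable i computed by the bound-tightening formula of the constraint propagation-based sampling algorithm, and no value of x compatible with the constraint and the box bounds is excluded by the tightening. -/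
/-!
Once `y i = x` is fixed, the constraint can be met exactly when it is met by the completion that
makes the remaining sum smallest. That sum is separable, so over the box it is minimized one
coordinate at a time: at the lower bound where the coefficient is positive, at the upper bound
where it is negative. Solving the resulting inequality for `x` gives the bound.
-/

section LinearOrderedRing

variable {ι R : Type*} [Ring R] [LinearOrder R]

/-- The corner of the box `∏ j, [ℓ j, u j]` at which the linear form with coefficients `a` is
smallest. Coordinates with `a j = 0` do not affect the form; they are placed at `u j`. -/
def boxMinimizer (a ℓ u : ι → R) (j : ι) : R :=
  if 0 < a j then ℓ j else u j

theorem boxMinimizer_mem_Icc (a : ι → R) {ℓ u : ι → R} {j : ι} (h : ℓ j ≤ u j) :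
    boxMinimizer a ℓ u j ∈ Set.Icc (ℓ j) (u j) := by
  unfold boxMinimizer
  split_ifs
  · exact Set.left_mem_Icc.2 h
  · exact Set.right_mem_Icc.2 h

theorem sum_mul_boxMinimizer (s : Finset ι) (a ℓ u : ι → R) :
    ∑ j ∈ s, a j * boxMinimizer a ℓ u j =
      ∑ j ∈ s with 0 < a j, a j * ℓ j + ∑ j ∈ s with a j < 0, a j * u j := by
  rw [Finset.sum_filter, Finset.sum_filter, ← Finset.sum_add_distrib]
  refine Finset.sum_congr rfl fun j _ => ?_
  rcases lt_trichotomy (a j) 0 with neg | zero | pos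
  · simp [boxMinimizer, neg, neg.not_gt]
  · simp [zero]
  · simp [boxMinimizer, pos, pos.not_gt]

variable [IsOrderedRing R]

theorem mul_boxMinimizer_le {a ℓ u y : ι → R} {j : ι} (hy : y j ∈ Set.Icc (ℓ j) (u j)) :
    a j * boxMinimizer a ℓ u j ≤ a j * y j := by
  unfold boxMinimizer
  split_ifs with ha
  · exact mul_le_mul_of_nonneg_left hy.1 ha.le
  · exact mul_le_mul_of_nonpos_left hy.2 (not_lt.1 ha)

theorem sum_mul_boxMinimizer_le {s : Finset ι} {a ℓ u y : ι → R}
    (hy : ∀ j ∈ s, y j ∈ Set.Icc (ℓ j) (u j)) :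
    ∑ j ∈ s, a j * boxMinimizer a ℓ u j ≤ ∑ j ∈ s, a j * y j :=
  Finset.sum_le_sum fun j hj => mul_boxMinimizer_le (hy j hj)

theorem exists_completion_sum_mul_le_iff [Fintype ι] [DecidableEq ι] {a ℓ u : ι → R} {b : R}
    {i : ι} (hlu : ∀ j, j ≠ i → ℓ j ≤ u j) (x : R) :
    (∃ y : ι → R, y i = x ∧ (∀ j, j ≠ i → ℓ j ≤ y j ∧ y j ≤ u j) ∧ ∑ j, a j * y j ≤ b) ↔
      a i * x + ∑ j with j ≠ i, a j * boxMinimizer a ℓ u j ≤ b := by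
  have sum_split (y : ι → R) : ∑ j, a j * y j = a i * y i + ∑ j with j ≠ i, a j * y j := by
    rw [Finset.filter_ne', Finset.add_sum_erase _ (fun j => a j * y j) (Finset.mem_univ i)]
  constructor
  · rintro ⟨y, rfl, hy, hsum⟩
    calc a i * y i + ∑ j with j ≠ i, a j * boxMinimizer a ℓ u j
        ≤ a i * y i + ∑ j with j ≠ i, a j * y j := by
          gcongr a i * y i + ?_
          exact sum_mul_boxMinimizer_le fun j hj => hy j (Finset.mem_filter_univ j |>.1 hj)
      _ = ∑ j, a j * y j := (sum_split y).symm
      _ ≤ b := hsum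
  · intro hx
    let y := Function.update (boxMinimizer a ℓ u) i x
    have y_of_ne {j : ι} (hj : j ≠ i) : y j = boxMinimizer a ℓ u j :=
      Function.update_of_ne hj _ _
    have y_self : y i = x := Function.update_self ..
    refine ⟨y, y_self, fun j hj => ?_, ?_⟩
    · rw [y_of_ne hj]
      exact boxMinimizer_mem_Icc a (hlu j hj)
    · have sum_eq : ∑ j with j ≠ i, a j * y j = ∑ j with j ≠ i, a j * boxMinimizer a ℓ u j :=
        Finset.sum_congr rfl fun j hj => by rw [y_of_ne (Finset.mem_filter_univ j |>.1 hj)]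
      rwa [sum_split, y_self, sum_eq]

end LinearOrderedRing

theorem bound_tightening_pos_coeff_general {ι K : Type*} [Fintype ι] [DecidableEq ι]
    [Field K] [LinearOrder K] [IsStrictOrderedRing K] {a ℓ u : ι → K} (b : K) {i : ι}
    (hai : 0 < a i) (hlu : ∀ j, j ≠ i → ℓ j ≤ u j) (x : K) :
    (∃ y : ι → K, y i = x ∧ (∀ j, j ≠ i → ℓ j ≤ y j ∧ y j ≤ u j) ∧ ∑ j, a j * y j ≤ b) ↔
      x ≤ (b - ∑ j with j ≠ i ∧ 0 < a j, a j * ℓ j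
        - ∑ j with j ≠ i ∧ a j < 0, a j * u j) / a i := by
  rw [exists_completion_sum_mul_le_iff hlu, sum_mul_boxMinimizer, Finset.filter_filter,
    Finset.filter_filter, le_div_iff₀' hai, sub_sub, le_sub_iff_add_le]

/-- Bound tightening for a positive-coefficient variable: the tightened upper bound
`T = (b − ∑_{j ≠ i, a j > 0} a j ℓ j − ∑_{j ≠ i, a j < 0} a j u j) / a i` exactly
characterizes the values of variable `i` that admit a feasible completion. -/
theorem bound_tightening_pos_coeff
    (n : ℕ) (a : Fin n → ℝ) (b : ℝ) (i : Fin n) (hai : 0 < a i)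
    (ℓ u : Fin n → ℝ) (hlu : ∀ j : Fin n, j ≠ i → ℓ j ≤ u j) :
    ∀ x : ℝ,
      (∃ y : Fin n → ℝ, y i = x ∧ (∀ j : Fin n, j ≠ i → ℓ j ≤ y j ∧ y j ≤ u j) ∧
        ∑ j, a j * y j ≤ b) ↔
      x ≤ (b - ∑ j ∈ Finset.univ.filter (fun j => j ≠ i ∧ 0 < a j), a j * ℓ j
             - ∑ j ∈ Finset.univ.filter (fun j => j ≠ i ∧ a j < 0), a j * u j) / a i := by
  exact bound_tightening_pos_coeff_general b hai hlu
end

section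
/- Let A be an m × n real matrix with nonnegative entries, let b ∈ ℝ^m and u ∈ ℝ^n have nonnegative entries, and let π : Fin n ≃ Fin n be any ordering of the variables. Suppose x : Fin n → ℝ is constructed sequentially so that for every step k: 0 ≤ x (π k), x (π k) ≤ u (π k), and for every constraint r with A r (π k) > 0, A r (π k) · x (π k) ≤ b r − ∑_{k' < k} A r (π k') · x (π k'). Then the resulting sample is feasible: 0 ≤ x j ≤ u j for every j, and ∑_j A r j · x j ≤ b r for every constraint r. -/
/-!
Every partial sum `∑ k' ≤ k, A r (π k') * x (π k')` is at most `b r`: a step with positive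
coefficient is capped by the residual, while any other step adds a nonpositive term to a partial
sum that was already at most `b r`.
-/

theorem sum_le_of_forall_pos_add_sum_lt_le {ι M : Type*} [LinearOrder ι] [AddCommMonoid M]
    [LinearOrder M] [IsOrderedAddMonoid M] {s : Finset ι} {f : ι → M} {b : M} (hb : 0 ≤ b)
    (h : ∀ k ∈ s, 0 < f k → f k + ∑ i ∈ s with i < k, f i ≤ b) :
    ∑ i ∈ s, f i ≤ b := by
  induction s using Finset.induction_on_max with
  | empty => simpa using hb
  | insert a s ha ih =>
    have ha_notMem : a ∉ s := fun has => (ha a has).false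
    rw [Finset.sum_insert ha_notMem]
    rcases lt_or_ge 0 (f a) with hpos | hnonpos
    · have filter_lt_max : {i ∈ insert a s | i < a} = s := by
        rw [Finset.filter_insert, if_neg (lt_irrefl a), Finset.filter_true_of_mem ha]
      simpa only [filter_lt_max] using h a (Finset.mem_insert_self a s) hpos
    · have sum_le : ∑ i ∈ s, f i ≤ b := ih fun k hk hk_pos => by
        have filter_lt : {i ∈ insert a s | i < k} = {i ∈ s | i < k} := by
          rw [Finset.filter_insert, if_neg (ha k hk).not_gt]
        simpa only [filter_lt] using h k (Finset.mem_insert_of_mem hk) hk_pos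
      exact (add_le_of_nonpos_left hnonpos).trans sum_le

theorem constraint_propagation_sampling_feasible_general
    {ρ ι κ R : Type*} [Fintype ι] [Fintype κ] [LinearOrder κ]
    [Ring R] [LinearOrder R] [IsOrderedRing R]
    {A : ρ → ι → R} {b : ρ → R} {u : ι → R} (hb : ∀ r, 0 ≤ b r) (π : κ ≃ ι) {x : ι → R}
    (hx0 : ∀ k, 0 ≤ x (π k)) (hxu : ∀ k, x (π k) ≤ u (π k))
    (hres : ∀ k r, 0 < A r (π k) →
      A r (π k) * x (π k) ≤ b r - ∑ k' with k' < k, A r (π k') * x (π k')) :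
    (∀ j, 0 ≤ x j ∧ x j ≤ u j) ∧ ∀ r, ∑ j, A r j * x j ≤ b r := by
  refine ⟨π.forall_congr_right.mp fun k => ⟨hx0 k, hxu k⟩, fun r => ?_⟩
  rw [← π.sum_comp]
  refine sum_le_of_forall_pos_add_sum_lt_le (hb r) fun k _ hk => ?_
  have coeff_pos : 0 < A r (π k) := lt_of_not_ge fun coeff_nonpos =>
    (mul_nonpos_of_nonpos_of_nonneg coeff_nonpos (hx0 k)).not_gt hk
  exact le_sub_iff_add_le.mp (hres k r coeff_pos)

/-- In the nonnegative-data CEP setting (`A, b, u ≥ 0`, `ℓ = 0`), any sample generated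
sequentially by the constraint propagation-based sampling algorithm is feasible. -/
theorem constraint_propagation_sampling_feasible
    (m n : ℕ) (A : Fin m → Fin n → ℝ) (b : Fin m → ℝ) (u : Fin n → ℝ)
    (hA : ∀ r j, 0 ≤ A r j) (hb : ∀ r, 0 ≤ b r) (hu : ∀ j, 0 ≤ u j)
    (π : Fin n ≃ Fin n) (x : Fin n → ℝ)
    (hx0 : ∀ k : Fin n, 0 ≤ x (π k))
    (hxu : ∀ k : Fin n, x (π k) ≤ u (π k))
    (hres : ∀ (k : Fin n) (r : Fin m), 0 < A r (π k) →
      A r (π k) * x (π k) ≤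
        b r - ∑ k' ∈ Finset.univ.filter (fun k' => k' < k), A r (π k') * x (π k')) :
    (∀ j : Fin n, 0 ≤ x j ∧ x j ≤ u j) ∧ (∀ r : Fin m, ∑ j, A r j * x j ≤ b r) :=
  constraint_propagation_sampling_feasible_general hb π hx0 hxu hres
end

section
/- Let A be an m × n real matrix with nonnegative entries, let b ∈ ℝ^m and u ∈ ℝ^n have nonnegative entries, and let π : Fin n ≃ Fin n be any ordering of the variables. Suppose x : Fin n → ℝ is constructed sequentially so that for every step k: 0 ≤ x (π k), x (π k) ≤ u (π k), and for every constraint r with A r (π k) > 0, A r (π k) · x (π k) ≤ b r − ∑_{k' < k} A r (π k') · x (π k'). Then for every step k and every constraint r, the residual b r − ∑_{k' < k} A r (π k') · x (π k') is nonnegative; consequently, at every step k the sampling interval [0, min(u (π k), min{(b r − ∑_{k' < k} A r (π k') · x (π k')) / (A r (π k)) : A r (π k) > 0})] is nonempty, i.e., its right endpoint is nonnegative. -/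
/-!
Step `k` consumes `A r (π k) * x (π k)` of the residual of constraint `r`. A positive consumption is
capped by the residual available, and a nonpositive one cannot decrease it. So look at the last
positive consumption before step `k` (or, if there is none, at the initial residual `b r ≥ 0`): the
residual is nonnegative right after it, and no later step decreases it.
-/

open Finset

section PartialSums

variable {κ M : Type*} [LinearOrder κ] [LocallyFiniteOrderBot κ]
  [AddCommMonoid M] [LinearOrder M] [IsOrderedAddMonoid M]

theorem sum_Iio_le_of_sum_Iic_le_of_pos {f : κ → M} {c : M} {k : κ} (hc : 0 ≤ c)
    (hf : ∀ i < k, 0 < f i → ∑ j ∈ Iic i, f j ≤ c) : ∑ j ∈ Iio k, f j ≤ c := by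
  rcases ({i ∈ Iio k | 0 < f i}).eq_empty_or_nonempty with hnone | hsome
  · have hnonpos : ∀ i ∈ Iio k, f i ≤ 0 := by
      simpa only [filter_eq_empty_iff, not_lt] using hnone
    exact (sum_nonpos hnonpos).trans hc
  · obtain ⟨p, hp, hlast⟩ := exists_max_image _ id hsome
    obtain ⟨hpk, hfp⟩ : p < k ∧ 0 < f p := by simpa only [mem_filter, mem_Iio] using hp
    have hafter : ∀ i ∈ Iio k, i ∉ Iic p → f i ≤ 0 := fun i hi hip ↦
      not_lt.mp fun hfi ↦ hip (mem_Iic.mpr (hlast i (mem_filter.mpr ⟨hi, hfi⟩)))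
    calc ∑ j ∈ Iio k, f j
        ≤ ∑ j ∈ Iic p, f j :=
          sum_le_sum_of_subset_of_nonpos'
            (fun i hi ↦ mem_Iio.mpr ((mem_Iic.mp hi).trans_lt hpk)) hafter
      _ ≤ c := hf p hpk hfp

end PartialSums

section Residual

variable {ι κ R : Type*} [LinearOrder κ] [LocallyFiniteOrderBot κ] [Ring R]

/-- The residual of the constraint `∑ j, A r j * x j ≤ b r` before step `k` of sequential sampling.
Variables are indexed by the step at which they are sampled: an ordering `π` of the variables is
encoded by replacing `A r` and `x` with `A r ∘ π` and `x ∘ π`. -/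
def stepResidual (A : ι → κ → R) (b : ι → R) (x : κ → R) (k : κ) (r : ι) : R :=
  b r - ∑ j ∈ Iio k, A r j * x j

theorem stepResidual_nonneg [LinearOrder R] [IsStrictOrderedRing R]
    {A : ι → κ → R} {b : ι → R} {x : κ → R} {k : κ} {r : ι} (hb : 0 ≤ b r)
    (hx : ∀ i < k, 0 ≤ x i)
    (hres : ∀ i < k, 0 < A r i → A r i * x i ≤ stepResidual A b x i r) :
    0 ≤ stepResidual A b x k r := by
  refine sub_nonneg.mpr (sum_Iio_le_of_sum_Iic_le_of_pos hb fun i hik hpos ↦ ?_)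
  have hA : 0 < A r i := pos_of_mul_pos_left hpos (hx i hik)
  rw [← add_sum_Iio_eq_sum_Iic]
  exact le_sub_iff_add_le.mp (hres i hik hA)

end Residual

section SamplingInterval

variable {ι κ : Type*} [LinearOrder κ] [LocallyFiniteOrderBot κ]
  {A : ι → κ → ℝ} {b : ι → ℝ} {u x : κ → ℝ} {k : κ}

/-- The right endpoint of the sampling interval at step `k`: the minimum of the upper bound `u k`
and of the ratios `stepResidual A b x k r / A r k` with `0 < A r k`. It is written as an infimum so
that infinitely many constraints are allowed; nonnegative residuals keep the set bounded below,
which excludes the junk value `sInf s = 0`. -/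
noncomputable def samplingEndpoint (A : ι → κ → ℝ) (b : ι → ℝ) (u x : κ → ℝ) (k : κ) : ℝ :=
  sInf (insert (u k) {t | ∃ r, 0 < A r k ∧ t = stepResidual A b x k r / A r k})

theorem samplingEndpoint_nonneg (hu : 0 ≤ u k)
    (hres : ∀ r, 0 < A r k → 0 ≤ stepResidual A b x k r) : 0 ≤ samplingEndpoint A b u x k := by
  refine Real.sInf_nonneg ?_
  rintro t (rfl | ⟨r, hr, rfl⟩)
  · exact hu
  · exact div_nonneg (hres r hr) hr.le

theorem constraint_propagation_sampling_interval_nonempty_general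
    (hb : ∀ r, 0 ≤ b r) (hu : 0 ≤ u k) (hx : ∀ i < k, 0 ≤ x i)
    (hres : ∀ i < k, ∀ r, 0 < A r i → A r i * x i ≤ stepResidual A b x i r) :
    (∀ r, 0 ≤ stepResidual A b x k r) ∧ 0 ≤ samplingEndpoint A b u x k := by
  have hnonneg : ∀ r, 0 ≤ stepResidual A b x k r := fun r ↦
    stepResidual_nonneg (hb r) hx fun i hik ↦ hres i hik r
  exact ⟨hnonneg, samplingEndpoint_nonneg hu fun r _ ↦ hnonneg r⟩

end SamplingInterval

/-- In the nonnegative-data CEP setting (`A, b, u ≥ 0`, `ℓ = 0`), the residuals remain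
nonnegative throughout the constraint propagation-based sampling algorithm, and hence
the right endpoint of the sampling interval at each step is nonnegative, so the
sampling interval is nonempty. -/
theorem constraint_propagation_sampling_interval_nonempty
    (m n : ℕ) (A : Fin m → Fin n → ℝ) (b : Fin m → ℝ) (u : Fin n → ℝ)
    (hA : ∀ r j, 0 ≤ A r j) (hb : ∀ r, 0 ≤ b r) (hu : ∀ j, 0 ≤ u j)
    (π : Fin n ≃ Fin n) (x : Fin n → ℝ)
    (hx0 : ∀ k : Fin n, 0 ≤ x (π k))
    (hxu : ∀ k : Fin n, x (π k) ≤ u (π k))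
    (hres : ∀ (k : Fin n) (r : Fin m), 0 < A r (π k) →
      A r (π k) * x (π k) ≤
        b r - ∑ k' ∈ Finset.univ.filter (fun k' => k' < k), A r (π k') * x (π k')) :
    (∀ (k : Fin n) (r : Fin m),
      0 ≤ b r - ∑ k' ∈ Finset.univ.filter (fun k' => k' < k), A r (π k') * x (π k')) ∧
    (∀ k : Fin n,
      0 ≤ sInf (insert (u (π k))
        {t : ℝ | ∃ r : Fin m, 0 < A r (π k) ∧
          t = (b r - ∑ k' ∈ Finset.univ.filter (fun k' => k' < k),
                 A r (π k') * x (π k')) / A r (π k)})) := by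
  have hstep (k : Fin n) := constraint_propagation_sampling_interval_nonempty_general
    (A := fun r j ↦ A r (π j)) (u := fun j ↦ u (π j)) (x := fun j ↦ x (π j)) (k := k)
    hb (hu (π k)) (fun i _ ↦ hx0 i)
    fun i _ r ↦ by simpa only [stepResidual, filter_gt_eq_Iio] using hres i r
  simpa only [stepResidual, samplingEndpoint, filter_gt_eq_Iio, forall_and] using hstep
end

section
/- Let n ∈ ℕ, let a : Fin n → ℝ, b ∈ ℝ, let i be an index with a i > 0, and let ℓ, u : Fin n → ℝ satisfy ℓ j ≤ u j for every j ≠ i. Define the extreme completion y : Fin n → ℝ by y j = ℓ j if a j > 0, y j = u j if a j < 0, and y j = ℓ j if a j = 0 (for j ≠ i). If x ∈ ℝ satisfies a i · x ≤ b − ∑_{j ≠ i, a j > 0} a j · ℓ j − ∑_{j ≠ i, a j < 0} a j · u j, then setting y i = x yields ℓ j ≤ y j ≤ u j for all j ≠ i and ∑_j a j · y j ≤ b; that is, any value of variable i within the tightened bound admits a feasible completion of the remaining variables within their box bounds. -/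
section ExtremeCompletion

open Finset Function

variable {ι R : Type*}

/-- A corner of the box `∏ j, [ℓ j, u j]` at which, over an ordered ring, the linear form
`∑ j, a j * z j` is smallest. Coordinates with `a j = 0` do not affect the form and are put at
their lower bounds. The extreme completion of the value `x` of variable `i` is
`Function.update (extremeCorner a ℓ u) i x`. -/
def extremeCorner [Zero R] [LT R] [DecidableLT R] (a ℓ u : ι → R) : ι → R :=
  fun j => if a j < 0 then u j else ℓ j

theorem extremeCorner_mem_Icc [Zero R] [Preorder R] [DecidableLT R] (a : ι → R) {ℓ u : ι → R}
    {j : ι} (h : ℓ j ≤ u j) : extremeCorner a ℓ u j ∈ Set.Icc (ℓ j) (u j) := by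
  unfold extremeCorner
  split_ifs
  · exact Set.right_mem_Icc.mpr h
  · exact Set.left_mem_Icc.mpr h

theorem mul_extremeCorner [NonUnitalNonAssocSemiring R] [LinearOrder R] (a ℓ u : ι → R) (j : ι) :
    a j * extremeCorner a ℓ u j =
      (if 0 < a j then a j * ℓ j else 0) + (if a j < 0 then a j * u j else 0) := by
  rcases lt_trichotomy (a j) 0 with hneg | hzero | hpos
  · simp [extremeCorner, hneg, hneg.not_gt]
  · simp [hzero]
  · simp [extremeCorner, hpos, hpos.not_gt]

theorem sum_mul_extremeCorner [NonUnitalNonAssocSemiring R] [LinearOrder R] (s : Finset ι)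
    (a ℓ u : ι → R) :
    ∑ j ∈ s, a j * extremeCorner a ℓ u j =
      ∑ j ∈ s with 0 < a j, a j * ℓ j + ∑ j ∈ s with a j < 0, a j * u j := by
  simp only [mul_extremeCorner, sum_add_distrib, sum_filter]

theorem sum_mul_update [Fintype ι] [DecidableEq ι] [NonUnitalNonAssocSemiring R]
    (a z : ι → R) (i : ι) (x : R) :
    ∑ j, a j * update z i x j = a i * x + ∑ j with j ≠ i, a j * z j := by
  rw [filter_ne', ← add_sum_erase univ _ (mem_univ i), update_self]
  congr 1
  exact sum_congr rfl fun j hj => by rw [update_of_ne (ne_of_mem_erase hj)]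

theorem extreme_completion_feasible_general [Fintype ι] [DecidableEq ι]
    [NonUnitalNonAssocRing R] [LinearOrder R] [IsOrderedAddMonoid R]
    {a ℓ u : ι → R} {b x : R} {i : ι} (hlu : ∀ j, j ≠ i → ℓ j ≤ u j)
    (hx : a i * x ≤ b - ∑ j with j ≠ i ∧ 0 < a j, a j * ℓ j
      - ∑ j with j ≠ i ∧ a j < 0, a j * u j) :
    (∀ j, j ≠ i → ℓ j ≤ update (extremeCorner a ℓ u) i x j ∧
      update (extremeCorner a ℓ u) i x j ≤ u j) ∧
      ∑ j, a j * update (extremeCorner a ℓ u) i x j ≤ b := by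
  constructor
  · intro j hj
    rw [update_of_ne hj]
    exact extremeCorner_mem_Icc a (hlu j hj)
  · rw [sum_mul_update, sum_mul_extremeCorner, filter_filter, filter_filter]
    rwa [sub_sub, le_sub_iff_add_le] at hx

end ExtremeCompletion

/-- The extreme completion (positive-coefficient variables at lower bounds,
negative-coefficient variables at upper bounds, zero-coefficient variables at lower
bounds) certifies feasibility of any value of variable `i` within the tightened
bound computed by the constraint propagation-based sampling algorithm. -/
theorem extreme_completion_feasible
    (n : ℕ) (a : Fin n → ℝ) (b : ℝ) (i : Fin n) (hai : 0 < a i)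
    (ℓ u : Fin n → ℝ) (hlu : ∀ j : Fin n, j ≠ i → ℓ j ≤ u j)
    (x : ℝ)
    (hx : a i * x ≤ b - ∑ j ∈ Finset.univ.filter (fun j => j ≠ i ∧ 0 < a j), a j * ℓ j
            - ∑ j ∈ Finset.univ.filter (fun j => j ≠ i ∧ a j < 0), a j * u j)
    (y : Fin n → ℝ)
    (hy : y = fun j => if j = i then x else if a j < 0 then u j else ℓ j) :
    (∀ j : Fin n, j ≠ i → ℓ j ≤ y j ∧ y j ≤ u j) ∧ ∑ j, a j * y j ≤ b := by
  obtain rfl : y = Function.update (extremeCorner a ℓ u) i x := by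
    ext j
    rw [hy, Function.update_apply, extremeCorner]
  exact extreme_completion_feasible_general hlu hx
end
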